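/- Let Φ = A_{n−1} and let I, J ⊆ Δ be arbitrary. Then the system (Φ, Φ_I, Φ_J) contains at most one block: any two weights λ, μ ∈ ^IW^Jλ̄ satisfy λ ⟷ μ, where λ̄ is a dominant integral weight with Φ_{λ̄} = Φ_J. (Equivalently, for g = gl(n, ℂ) every infinitesimal block O_λ^p of parabolic category O is a single block — Brundan's theorem for type A.) -/

import Mathlib

namespace JantzenBlocksA

open scoped Classical

/-- The weight space `ℝ^n`. -/
abbrev V (n : ℕ) := Fin n → ℝ

noncomputable section

/-- The standard inner product on `ℝ^n`. -/
def inn {n : ℕ} (x y : V n) : ℝ := ∑ i, x i * y i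

/-- The standard basis vector `e i`. -/
def ee {n : ℕ} (i : Fin n) : V n := Pi.single i 1

/-- The reflection `s_v` in the vector `v`. -/
def sRefl {n : ℕ} (v x : V n) : V n := x - (2 * inn x v / inn v v) • v

/-- The root system `Φ = A_{n-1} = {e_i - e_j : i ≠ j}`. -/
def PhiA (n : ℕ) : Set (V n) := {v | ∃ i j : Fin n, i ≠ j ∧ v = ee i - ee j}

/-- The positive system `Φ⁺ = {e_i - e_j : i < j}`. -/
def PhiAPos (n : ℕ) : Set (V n) := {v | ∃ i j : Fin n, i < j ∧ v = ee i - ee j}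

/-- The simple root `α_{i+1} = e_{i+1} - e_{i+2}` (`0`-based index `i < n-1`). -/
def alphaA (n : ℕ) (i : Fin n) : V n :=
  if h : i.1 + 1 < n then ee i - ee ⟨i.1 + 1, h⟩ else 0

/-- The subsystem `Φ_I` generated by the simple roots indexed by `I`. -/
def PhiI (n : ℕ) (I : Finset (Fin n)) : Set (V n) :=
  PhiA n ∩ (Submodule.span ℝ (alphaA n '' (I : Set (Fin n))) : Set (V n))

/-- `λ` is `Φ_I`-regular. -/
def RegI (n : ℕ) (I : Finset (Fin n)) (lam : V n) : Prop :=
  ∀ β ∈ PhiI n I, inn lam β ≠ 0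

/-- `λ` is integral. -/
def IntegralW (n : ℕ) (lam : V n) : Prop :=
  ∀ β ∈ PhiA n, ∃ k : ℤ, 2 * inn lam β / inn β β = (k : ℝ)

/-- `λ` is dominant. -/
def DominantW (n : ℕ) (lam : V n) : Prop :=
  ∀ i : Fin n, 0 ≤ inn lam (alphaA n i)

/-- `μ` lies in the `W_I`-orbit of `λ`. -/
def WIOrb (n : ℕ) (I : Finset (Fin n)) : V n → V n → Prop :=
  Relation.ReflTransGen (fun x y => ∃ i ∈ I, y = sRefl (alphaA n i) x)

/-- `μ` lies in the `W`-orbit of `λ`. -/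
def WOrb (n : ℕ) : V n → V n → Prop := WIOrb n Finset.univ

/-- `λ ∈ Λ_I⁺`. -/
def LamIPlus (n : ℕ) (I : Finset (Fin n)) (lam : V n) : Prop :=
  IntegralW n lam ∧ ∀ i ∈ I, 0 < inn lam (alphaA n i)

/-- The sorted list `q_1 < … < q_{m-1}` (`1`-based values) of indices of `Δ∖I`. -/
def QlistA (n : ℕ) (I : Finset (Fin n)) : List ℕ :=
  (((Finset.univ.filter (fun j : Fin n => j.1 + 1 < n)) \ I).sort (· ≤ ·)).map
    (fun j => j.1 + 1)

/-- The number `m` of segments determined by `I`. -/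
def mvalA (n : ℕ) (I : Finset (Fin n)) : ℕ := (QlistA n I).length + 1

/-- `q_s`, with the conventions `q_0 = 0` and `q_m = n`. -/
def qA (n : ℕ) (I : Finset (Fin n)) (s : ℕ) : ℕ :=
  if s = 0 then 0 else if s < mvalA n I then (QlistA n I).getD (s - 1) 0 else n

/-- The multiplicity `n̄_t` of the `t`-th distinct value of a dominant weight. -/
def nbarA (n : ℕ) (J : Finset (Fin n)) (t : ℕ) : ℕ := qA n J t - qA n J (t - 1)

/-- `a_t = λ̄_{q̄_t}`: the `t`-th distinct entry value of the dominant weight `λ̄`. -/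
def aA (n : ℕ) (J : Finset (Fin n)) (lbar : V n) (t : ℕ) : ℝ :=
  if h : qA n J t - 1 < n then lbar ⟨qA n J t - 1, h⟩ else 0

/-- `β` is a linked root of `λ` (type `A`: no exceptional cases). -/
def LinkedA (n : ℕ) (I : Finset (Fin n)) (lam β : V n) : Prop :=
  RegI n I lam ∧ β ∈ PhiAPos n ∧ β ∉ PhiI n I ∧
  RegI n I (sRefl β lam) ∧ sRefl β lam ≠ lam

/-- One step in a connecting chain. -/
def ConnStepA (n : ℕ) (I : Finset (Fin n)) (x y : V n) : Prop :=
  RegI n I x ∧ RegI n I y ∧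
  (WIOrb n I x y ∨ ∃ β : V n, LinkedA n I x β ∧ WIOrb n I (sRefl β x) y)

/-- `λ ⟷ μ`: `λ` and `μ` are connected. -/
def ConnA (n : ℕ) (I : Finset (Fin n)) (lam mu : V n) : Prop :=
  RegI n I lam ∧ RegI n I mu ∧ Relation.ReflTransGen (ConnStepA n I) lam mu

/-- The set `^IW^Jλ̄ = Wλ̄ ∩ Λ_I⁺`. -/
def IWJsetA (n : ℕ) (I : Finset (Fin n)) (lbar : V n) : Set (V n) :=
  {mu | WOrb n lbar mu ∧ LamIPlus n I mu}

end

/-! ### Combinatorics of interchanges -/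

section comb

variable {n : ℕ}

/-- injectivity on segments -/
def CReg (c : Fin n → ℕ) (x : V n) : Prop := ∀ i j, c i = c j → x i = x j → i = j

/-- one interchange -/
def SStep (c : Fin n → ℕ) (x y : V n) : Prop :=
  CReg c x ∧ CReg c y ∧ ∃ i j, y = x ∘ Equiv.swap i j

/-- the value `a` occurs in segment `s` -/
def Occ (c : Fin n → ℕ) (x : V n) (s : ℕ) (a : ℝ) : Prop := ∃ i, c i = s ∧ x i = a

theorem SStep.symm {c : Fin n → ℕ} {x y : V n} (h : SStep c x y) : SStep c y x := by
  obtain ⟨h1, h2, i, j, rfl⟩ := h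
  refine ⟨h2, h1, i, j, ?_⟩
  funext k
  simp

theorem SR.symm {c : Fin n → ℕ} {x y : V n} (h : Relation.ReflTransGen (SStep c) x y) :
    Relation.ReflTransGen (SStep c) y x := by
  induction h with
  | refl => exact .refl
  | tail _ h2 ih => exact Relation.ReflTransGen.head h2.symm ih

theorem CReg.swap_same {c : Fin n → ℕ} {x : V n} (h : CReg c x) {i j : Fin n} (hij : c i = c j) :
    CReg c (x ∘ Equiv.swap i j) := by
  have hc : ∀ k, c (Equiv.swap i j k) = c k := by
    intro k
    rw [Equiv.swap_apply_def]
    split_ifs with h1 h2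
    · rw [h1, hij]
    · rw [h2, hij]
    · rfl
  intro k l hkl hx
  have := h (Equiv.swap i j k) (Equiv.swap i j l) (by rw [hc, hc, hkl]) hx
  exact (Equiv.swap i j).injective this

theorem base_conn {c : Fin n → ℕ} {y : V n} (hy : CReg c y) : ∀ (d : ℕ) (x : V n), CReg c x →
    (∀ s a, Occ c x s a ↔ Occ c y s a) →
    (Finset.univ.filter (fun i => x i ≠ y i)).card = d →
    Relation.ReflTransGen (SStep c) x y := by
  intro d
  induction d using Nat.strong_induction_on with
  | _ d ih =>
  intro x hx hocc hd
  by_cases hxy : x = y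
  · rw [hxy]
  obtain ⟨i, hi⟩ : ∃ i, x i ≠ y i := by
    by_contra hcon
    push Not at hcon
    exact hxy (funext hcon)
  obtain ⟨j, hj, hxj⟩ := (hocc (c i) (y i)).2 ⟨i, rfl, rfl⟩
  have hij : i ≠ j := by rintro rfl; exact hi hxj
  have hreg := hx.swap_same hj.symm
  refine Relation.ReflTransGen.head ⟨hx, hreg, i, j, rfl⟩ (ih _ ?_ _ hreg ?_ rfl)
  · rw [← hd]
    apply Finset.card_lt_card
    rw [Finset.ssubset_iff_of_subset]
    · refine ⟨i, by simp [hi], by simp [hxj]⟩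
    · intro k
      simp only [Finset.mem_filter, Finset.mem_univ, true_and, Function.comp]
      rw [Equiv.swap_apply_def]
      split_ifs with h1 h2
      · subst h1; intro _; exact hi
      · subst h2
        intro _ h
        exact hij (hy i k hj.symm (by rw [← hxj, h]))
      · exact id
  · intro s a
    rw [← hocc]
    have hc : ∀ k, c (Equiv.swap i j k) = c k := by
      intro k
      rw [Equiv.swap_apply_def]
      split_ifs with h1 h2
      · rw [h1, hj]
      · rw [h2, hj]
      · rfl
    constructor
    · rintro ⟨k, hk, hk'⟩
      exact ⟨Equiv.swap i j k, by rw [hc, hk], hk'⟩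
    · rintro ⟨k, hk, hk'⟩
      exact ⟨Equiv.swap i j k, by rw [hc, hk], by simpa using hk'⟩

/-- segments where `a` occurs in exactly one of the two -/
noncomputable def Dis (c : Fin n → ℕ) (x y : V n) (a : ℝ) : Finset ℕ :=
  (Finset.univ.image c).filter (fun s => ¬ (Occ c x s a ↔ Occ c y s a))

theorem Occ.mem {c : Fin n → ℕ} {x : V n} {s : ℕ} {a : ℝ} (h : Occ c x s a) :
    s ∈ Finset.univ.image c := by
  obtain ⟨i, hi, _⟩ := h
  simp only [Finset.mem_image, Finset.mem_univ, true_and]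
  exact ⟨i, hi⟩

theorem Dis_comm (c : Fin n → ℕ) (x y : V n) (a : ℝ) : Dis c x y a = Dis c y x a := by
  unfold Dis
  congr 1
  funext s
  rw [iff_comm]

theorem mem_Dis {c : Fin n → ℕ} {x y : V n} {a : ℝ} {s : ℕ} :
    s ∈ Dis c x y a ↔ ¬ (Occ c x s a ↔ Occ c y s a) := by
  unfold Dis
  rw [Finset.mem_filter]
  constructor
  · exact fun h => h.2
  · intro h
    refine ⟨?_, h⟩
    by_cases h1 : Occ c x s a
    · exact h1.mem
    · by_cases h2 : Occ c y s a
      · exact h2.mem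
      · exact absurd (iff_of_false h1 h2) h

theorem exch {c : Fin n → ℕ} {x y : V n} {a b : ℝ} {s t : ℕ} (hx : CReg c x)
    (h1 : Occ c x s a) (h2 : ¬ Occ c y s a) (h3 : Occ c y t a) (h4 : ¬ Occ c x t a)
    (h5 : Occ c x t b) (h6 : ¬ Occ c x s b) :
    ∃ x', SStep c x x' ∧ (∃ σ : Equiv.Perm (Fin n), x' = x ∘ σ) ∧
      (Dis c x' y a).card < (Dis c x y a).card ∧
      ∀ u v, v ≠ a → v ≠ b → (Occ c x' u v ↔ Occ c x u v) := by
  obtain ⟨i, hi, hxi⟩ := h1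
  obtain ⟨j, hj, hxj⟩ := h5
  have hst : s ≠ t := by rintro rfl; exact h4 ⟨i, hi, hxi⟩
  have hab : a ≠ b := by rintro rfl; exact h4 ⟨j, hj, hxj⟩
  have hij : i ≠ j := by rintro rfl; exact hst (hi.symm.trans hj)
  have ei : (x ∘ Equiv.swap i j) i = b := by simp [hxj]
  have ej : (x ∘ Equiv.swap i j) j = a := by simp [hxi]
  have ek : ∀ k, k ≠ i → k ≠ j → (x ∘ Equiv.swap i j) k = x k := by
    intro k hk hk'
    simp [Equiv.swap_apply_of_ne_of_ne hk hk']
  generalize hx' : x ∘ Equiv.swap i j = x' at *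
  have hreg : CReg c x' := by
    intro k l hkl hv
    by_contra hne
    have aux : ∀ l, l ≠ i → c i = c l → x' i ≠ x' l := by
      intro l hl hc hv
      have hlj : l ≠ j := by rintro rfl; exact hst (by rw [← hi, ← hj, hc])
      rw [ei, ek l hl hlj] at hv
      exact h6 ⟨l, by rw [← hc, hi], hv.symm⟩
    have aux2 : ∀ l, l ≠ j → c j = c l → x' j ≠ x' l := by
      intro l hl hc hv
      have hli : l ≠ i := by rintro rfl; exact hst (by rw [← hi, ← hj, hc])
      rw [ej, ek l hli hl] at hv
      exact h4 ⟨l, by rw [← hc, hj], hv.symm⟩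
    by_cases k1 : k = i
    · subst k1; exact aux l (Ne.symm hne) hkl hv
    by_cases k2 : k = j
    · subst k2; exact aux2 l (Ne.symm hne) hkl hv
    by_cases l1 : l = i
    · subst l1; exact aux k hne hkl.symm hv.symm
    by_cases l2 : l = j
    · subst l2; exact aux2 k hne hkl.symm hv.symm
    rw [ek k k1 k2, ek l l1 l2] at hv
    exact hne (hx k l hkl hv)
  refine ⟨x', ⟨hx, hreg, i, j, hx'.symm⟩, ⟨_, hx'.symm⟩, ?_, ?_⟩
  · apply Finset.card_lt_card
    rw [Finset.ssubset_iff_of_subset]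
    · refine ⟨s, ?_, ?_⟩
      · rw [mem_Dis]
        intro h
        exact h2 (h.1 ⟨i, hi, hxi⟩)
      · rw [mem_Dis, not_not]
        refine iff_of_false ?_ h2
        rintro ⟨k, hk, hk'⟩
        have hkj : k ≠ j := by rintro rfl; exact hst (hk.symm.trans hj)
        have hki : k ≠ i := by rintro rfl; exact hab (hk'.symm.trans ei)
        rw [ek k hki hkj] at hk'
        exact hki (hx k i (by rw [hk, hi]) (by rw [hk', hxi]))
    · intro u
      rw [mem_Dis, mem_Dis]
      intro h h'
      apply h
      by_cases hus : u = s
      · subst hus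
        exact absurd (h'.1 ⟨i, hi, hxi⟩) h2
      by_cases hut : u = t
      · subst hut
        exact iff_of_true ⟨j, hj, ej⟩ h3
      rw [← h']
      constructor
      · rintro ⟨k, hk, hk'⟩
        have hkj : k ≠ j := by rintro rfl; exact hut (hk.symm.trans hj)
        have hki : k ≠ i := by rintro rfl; exact hus (hk.symm.trans hi)
        exact ⟨k, hk, by rw [← ek k hki hkj, hk']⟩
      · rintro ⟨k, hk, hk'⟩
        have hkj : k ≠ j := by rintro rfl; exact hut (hk.symm.trans hj)
        have hki : k ≠ i := by rintro rfl; exact hus (hk.symm.trans hi)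
        exact ⟨k, hk, by rw [ek k hki hkj, hk']⟩
  · intro u v hva hvb
    constructor
    · rintro ⟨k, hk, hk'⟩
      have hkj : k ≠ j := by rintro rfl; exact hva (hk'.symm.trans ej)
      have hki : k ≠ i := by rintro rfl; exact hvb (hk'.symm.trans ei)
      exact ⟨k, hk, by rw [← ek k hki hkj, hk']⟩
    · rintro ⟨k, hk, hk'⟩
      have hkj : k ≠ j := by rintro rfl; exact hvb (hk'.symm.trans hxj)
      have hki : k ≠ i := by rintro rfl; exact hva (hk'.symm.trans hxi)
      exact ⟨k, hk, by rw [ek k hki hkj, hk']⟩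

/-- set of segments containing `a` -/
noncomputable def Col (c : Fin n → ℕ) (x : V n) (a : ℝ) : Finset ℕ :=
  (Finset.univ.filter (fun i => x i = a)).image c

theorem mem_Col {c : Fin n → ℕ} {x : V n} {a : ℝ} {s : ℕ} : s ∈ Col c x a ↔ Occ c x s a := by
  simp only [Col, Occ, Finset.mem_image, Finset.mem_filter, Finset.mem_univ, true_and]
  constructor <;> rintro ⟨i, h1, h2⟩ <;> exact ⟨i, h2, h1⟩

theorem card_Col {c : Fin n → ℕ} {x : V n} (hx : CReg c x) (a : ℝ) :
    (Col c x a).card = (Finset.univ.filter (fun i => x i = a)).card := by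
  apply Finset.card_image_of_injOn
  intro i hi j hj hij
  simp at hi hj
  exact hx i j hij (hi.trans hj.symm)

theorem card_perm (x : V n) (σ : Equiv.Perm (Fin n)) (a : ℝ) :
    (Finset.univ.filter (fun i => (x ∘ σ) i = a)).card =
      (Finset.univ.filter (fun i => x i = a)).card := by
  apply Finset.card_bij (fun i _ => σ i)
  · simp
  · intro i _ j _ h; exact σ.injective h
  · intro j hj
    exact ⟨σ.symm j, by simpa using hj, by simp⟩

/-- set of values in segment `s` -/
noncomputable def Row (c : Fin n → ℕ) (x : V n) (s : ℕ) : Finset ℝ :=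
  (Finset.univ.filter (fun i => c i = s)).image x

theorem mem_Row {c : Fin n → ℕ} {x : V n} {a : ℝ} {s : ℕ} : a ∈ Row c x s ↔ Occ c x s a := by
  simp only [Row, Occ, Finset.mem_image, Finset.mem_filter, Finset.mem_univ, true_and]

theorem card_Row {c : Fin n → ℕ} {x : V n} (hx : CReg c x) (s : ℕ) :
    (Row c x s).card = (Finset.univ.filter (fun i => c i = s)).card := by
  apply Finset.card_image_of_injOn
  intro i hi j hj hij
  simp at hi hj
  exact hx i j (hi.trans hj.symm) hij

theorem card_Row_inter {c : Fin n → ℕ} {x y : V n} (hx : CReg c x) (hy : CReg c y)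
    (F : Finset ℝ) (h : ∀ v ∉ F, ∀ s, Occ c x s v ↔ Occ c y s v) (s : ℕ) :
    (Row c x s ∩ F).card = (Row c y s ∩ F).card := by
  have e : Row c x s \ F = Row c y s \ F := by
    ext v
    simp only [Finset.mem_sdiff, mem_Row]
    constructor <;> rintro ⟨h1, h2⟩
    · exact ⟨(h v h2 s).1 h1, h2⟩
    · exact ⟨(h v h2 s).2 h1, h2⟩
  have h1 := Finset.card_sdiff_add_card_inter (Row c x s) F
  have h2 := Finset.card_sdiff_add_card_inter (Row c y s) F
  rw [card_Row hx] at h1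
  rw [card_Row hy, ← e] at h2
  omega

theorem main_comb (c : Fin n → ℕ) (F : Finset ℝ) : ∀ x y : V n, CReg c x → CReg c y →
    (∃ σ : Equiv.Perm (Fin n), y = x ∘ σ) →
    (∀ v ∉ F, ∀ s, Occ c x s v ↔ Occ c y s v) → Relation.ReflTransGen (SStep c) x y := by
  induction F using Finset.induction_on with
  | empty =>
    intro x y hx hy _ h
    exact base_conn hy _ x hx (fun s a => h a (by simp) s) rfl
  | insert a F haF ihF =>
    suffices H : ∀ (d : ℕ) (x y : V n), CReg c x → CReg c y →
        (∃ σ : Equiv.Perm (Fin n), y = x ∘ σ) →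
        (∀ v ∉ insert a F, ∀ s, Occ c x s v ↔ Occ c y s v) → (Dis c x y a).card = d →
        Relation.ReflTransGen (SStep c) x y by
      intro x y hx hy hs h
      exact H _ x y hx hy hs h rfl
    intro d
    induction d using Nat.strong_induction_on with
    | _ d ih =>
    intro x y hx hy hσ h hd
    obtain ⟨σ, hσ⟩ := hσ
    by_cases hcol : Col c x a = Col c y a
    · apply ihF x y hx hy ⟨σ, hσ⟩
      intro v hv s
      by_cases hva : v = a
      · subst hva
        rw [← mem_Col, hcol, mem_Col]
      · exact h v (by simp [hva, hv]) s
    have hcard : (Col c x a).card = (Col c y a).card := by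
      rw [card_Col hx, card_Col hy, hσ, card_perm]
    obtain ⟨s, hs1, hs2⟩ : ∃ s ∈ Col c x a, s ∉ Col c y a := by
      by_contra hcon
      push Not at hcon
      exact hcol (Finset.eq_of_subset_of_card_le hcon hcard.ge)
    obtain ⟨t, ht1, ht2⟩ : ∃ s ∈ Col c y a, s ∉ Col c x a := by
      by_contra hcon
      push Not at hcon
      exact hcol (Finset.eq_of_subset_of_card_le hcon hcard.le).symm
    rw [mem_Col] at hs1 hs2 ht1 ht2
    have key : (∃ b ∈ insert a F, Occ c x t b ∧ ¬ Occ c x s b) ∨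
        (∃ b ∈ insert a F, Occ c y s b ∧ ¬ Occ c y t b) := by
      by_contra hcon
      push Not at hcon
      obtain ⟨k1, k2⟩ := hcon
      have l1 : (Row c x t ∩ insert a F).card < (Row c x s ∩ insert a F).card := by
        apply Finset.card_lt_card
        rw [Finset.ssubset_iff_of_subset]
        · exact ⟨a, by simp [mem_Row, hs1], by simp [mem_Row, ht2]⟩
        · intro v hv
          rw [Finset.mem_inter, mem_Row] at hv ⊢
          exact ⟨k1 v hv.2 hv.1, hv.2⟩
      have l2 : (Row c y s ∩ insert a F).card < (Row c y t ∩ insert a F).card := by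
        apply Finset.card_lt_card
        rw [Finset.ssubset_iff_of_subset]
        · exact ⟨a, by simp [mem_Row, ht1], by simp [mem_Row, hs2]⟩
        · intro v hv
          rw [Finset.mem_inter, mem_Row] at hv ⊢
          exact ⟨k2 v hv.2 hv.1, hv.2⟩
      have l3 := card_Row_inter hx hy _ h s
      have l4 := card_Row_inter hx hy _ h t
      omega
    rcases key with ⟨b, hbF, hb1, hb2⟩ | ⟨b, hbF, hb1, hb2⟩
    · obtain ⟨x', hst, ⟨τ, hτ⟩, hlt, hocc⟩ := exch (y := y) hx hs1 hs2 ht1 ht2 hb1 hb2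
      refine Relation.ReflTransGen.head hst (ih _ (hd ▸ hlt) x' y hst.2.1 hy ?_ ?_ rfl)
      · refine ⟨σ.trans τ.symm, ?_⟩
        rw [hσ, hτ]
        funext k
        simp
      · intro v hv u
        rw [← h v hv u]
        apply hocc
        · rintro rfl; exact hv (by simp)
        · rintro rfl; exact hv hbF
    · obtain ⟨y', hst, ⟨τ, hτ⟩, hlt, hocc⟩ := exch (y := x) hy ht1 ht2 hs1 hs2 hb1 hb2
      rw [Dis_comm c y' x, Dis_comm c y x] at hlt
      refine Relation.ReflTransGen.tail (ih _ (hd ▸ hlt) x y' hx hst.2.1 ?_ ?_ rfl) hst.symm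
      · refine ⟨τ.trans σ, ?_⟩
        rw [hτ, hσ]
        funext k
        simp
      · intro v hv u
        rw [h v hv u]
        symm
        apply hocc
        · rintro rfl; exact hv (by simp)
        · rintro rfl; exact hv hbF

theorem comb_final (c : Fin n → ℕ) (x y : V n) (hx : CReg c x) (hy : CReg c y)
    (h : ∃ σ : Equiv.Perm (Fin n), y = x ∘ σ) : Relation.ReflTransGen (SStep c) x y := by
  apply main_comb c (Finset.univ.image x ∪ Finset.univ.image y) x y hx hy h
  intro v hv s
  simp only [Finset.mem_union, Finset.mem_image, Finset.mem_univ, true_and, not_or, not_exists]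
    at hv
  exact iff_of_false (fun ⟨i, _, hi⟩ => hv.1 i hi) (fun ⟨i, _, hi⟩ => hv.2 i hi)

end comb

/-! ### Translation -/

section transl

variable {n : ℕ}

theorem inn_ee (x : V n) (i j : Fin n) : inn x (ee i - ee j) = x i - x j := by
  simp [inn, ee, mul_sub, Finset.sum_sub_distrib, Pi.single_apply]

theorem sRefl_ee (x : V n) {i j : Fin n} (hij : i ≠ j) :
    sRefl (ee i - ee j) x = x ∘ Equiv.swap i j := by
  have h2 : inn (ee i - ee j : V n) (ee i - ee j) = 2 := by
    rw [inn_ee]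
    simp [ee, Pi.single_apply, hij, hij.symm]
    norm_num
  unfold sRefl
  rw [h2, inn_ee]
  funext k
  simp only [Pi.sub_apply, Pi.smul_apply, ee, Pi.single_apply, smul_eq_mul, Function.comp]
  rw [Equiv.swap_apply_def]
  by_cases h1 : k = i
  · subst h1; simp [hij]
  · by_cases h3 : k = j
    · subst h3; simp [h1]
    · simp [h1, h3]

theorem sRefl_zero (x : V n) : sRefl 0 x = x := by
  simp [sRefl]

/-- segment index -/
noncomputable def segc (I : Finset (Fin n)) (i : Fin n) : ℕ :=
  (Finset.univ.filter (fun k => k < i ∧ k ∉ I)).card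

theorem segc_all {I : Finset (Fin n)} {i j : Fin n} (hij : i ≤ j) (h : segc I i = segc I j)
    (k : Fin n) (hik : i ≤ k) (hkj : k < j) : k ∈ I := by
  by_contra hk
  have hsub : Finset.univ.filter (fun k => k < i ∧ k ∉ I) ⊆
      Finset.univ.filter (fun k => k < j ∧ k ∉ I) := by
    intro l
    simp only [Finset.mem_filter, Finset.mem_univ, true_and]
    exact fun hl => ⟨lt_of_lt_of_le hl.1 hij, hl.2⟩
  have e := Finset.eq_of_subset_of_card_le hsub h.ge
  have hm : k ∈ Finset.univ.filter (fun k => k < j ∧ k ∉ I) := by simp [hkj, hk]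
  rw [← e] at hm
  simp only [Finset.mem_filter, Finset.mem_univ, true_and] at hm
  exact absurd hm.1 (not_lt.2 hik)

theorem segc_succ {I : Finset (Fin n)} {i : Fin n} (hi : i ∈ I) (h : i.1 + 1 < n) :
    segc I i = segc I ⟨i.1 + 1, h⟩ := by
  unfold segc
  congr 1
  ext k
  simp only [Finset.mem_filter, Finset.mem_univ, true_and, and_congr_left_iff]
  intro hk
  have : k ≠ i := by rintro rfl; exact hk hi
  have : k.1 ≠ i.1 := fun h => this (Fin.ext h)
  simp only [Fin.lt_def]
  omega

theorem alphaA_pos {i : Fin n} (h : i.1 + 1 < n) : alphaA n i = ee i - ee ⟨i.1 + 1, h⟩ := by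
  simp [alphaA, h]

/-- induction along an interval of `I` -/
theorem seg_span {I : Finset (Fin n)} (i : Fin n) : ∀ (d : ℕ) (j : Fin n), j.1 = i.1 + d →
    (∀ k, i ≤ k → k < j → k ∈ I) →
    (ee i - ee j : V n) ∈ Submodule.span ℝ (alphaA n '' (I : Set (Fin n))) := by
  intro d
  induction d with
  | zero =>
    intro j hj _
    have : j = i := Fin.ext (by simpa using hj)
    rw [this, sub_self]
    exact Submodule.zero_mem _
  | succ d ih =>
    intro j hj h
    have hj' := j.2
    have hl : i.1 + d < n := by omega
    have h1 := ih ⟨i.1 + d, hl⟩ rfl (fun k hk hk' => h k hk (lt_trans hk' (by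
      simp only [Fin.lt_def]; omega)))
    have h2 : (⟨i.1 + d, hl⟩ : Fin n) ∈ I := h _ (by simp [Fin.le_def]) (by
      simp only [Fin.lt_def]; omega)
    have h3 : alphaA n ⟨i.1 + d, hl⟩ ∈ Submodule.span ℝ (alphaA n '' (I : Set (Fin n))) :=
      Submodule.subset_span ⟨_, h2, rfl⟩
    rw [alphaA_pos (by simp only; omega)] at h3
    have e : (⟨i.1 + d + 1, by omega⟩ : Fin n) = j := Fin.ext (by simp only; omega)
    simp only [e] at h3
    have := Submodule.add_mem _ h1 h3
    simpa using this

theorem seg_dec {I : Finset (Fin n)} (x : V n) (hx : ∀ i ∈ I, 0 < inn x (alphaA n i))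
    (i : Fin n) : ∀ (d : ℕ) (j : Fin n), j.1 = i.1 + (d + 1) →
    (∀ k, i ≤ k → k < j → k ∈ I) → x j < x i := by
  intro d
  induction d with
  | zero =>
    intro j hj h
    have hj' := j.2
    have h2 := hx i (h i le_rfl (by simp only [Fin.lt_def]; omega))
    rw [alphaA_pos (by omega), inn_ee] at h2
    have e : (⟨i.1 + 1, by omega⟩ : Fin n) = j := Fin.ext (by simp only; omega)
    simp only [e] at h2
    linarith
  | succ d ih =>
    intro j hj h
    have hj' := j.2
    have hl : i.1 + (d + 1) < n := by omega
    have h1 := ih ⟨i.1 + (d + 1), hl⟩ rfl (fun k hk hk' => h k hk (lt_trans hk' (by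
      simp only [Fin.lt_def]; omega)))
    have h2 := hx _ (h ⟨i.1 + (d + 1), hl⟩ (by simp [Fin.le_def]) (by
      simp only [Fin.lt_def]; omega))
    rw [alphaA_pos (by simp only; omega), inn_ee] at h2
    have e : (⟨i.1 + (d + 1) + 1, by omega⟩ : Fin n) = j := Fin.ext (by simp only; omega)
    simp only [e] at h2
    linarith

theorem seg_orb {I : Finset (Fin n)} (i : Fin n) : ∀ (d : ℕ) (j : Fin n), j.1 = i.1 + d →
    (∀ k, i ≤ k → k < j → k ∈ I) → ∀ x : V n, WIOrb n I x (x ∘ Equiv.swap i j) := by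
  intro d
  induction d with
  | zero =>
    intro j hj _ x
    have : j = i := Fin.ext (by simpa using hj)
    rw [this, Equiv.swap_self]
    exact .refl
  | succ d ih =>
    intro j hj h x
    have hj' := j.2
    have hl : i.1 + d < n := by omega
    obtain ⟨l, rfl⟩ : ∃ l : Fin n, l = ⟨i.1 + d, hl⟩ := ⟨_, rfl⟩
    set l : Fin n := ⟨i.1 + d, hl⟩ with hldef
    have hlv : l.1 = i.1 + d := rfl
    have h1 := ih l rfl (fun k hk hk' => h k hk (lt_trans hk' (by
      simp only [Fin.lt_def]; omega)))
    have h2 : l ∈ I := h _ (by simp [Fin.le_def, hlv]) (by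
      simp only [Fin.lt_def]; omega)
    have hlj : l ≠ j := by intro h; rw [h] at hlv; omega
    have hij : i ≠ j := by intro h; rw [h] at hj; omega
    have e : (⟨l.1 + 1, by omega⟩ : Fin n) = j := Fin.ext (by simp only; omega)
    have hstep : ∀ z : V n, WIOrb n I z (z ∘ Equiv.swap l j) := by
      intro z
      refine Relation.ReflTransGen.single ⟨l, h2, ?_⟩
      rw [alphaA_pos (by omega), e, sRefl_ee z hlj]
    by_cases hil : i = l
    · rw [hil]; exact hstep x
    have := ((hstep x).trans (h1 _)).trans (hstep _)
    unfold WIOrb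
    refine Eq.subst (motive := fun z => Relation.ReflTransGen _ x z) ?_ this
    funext k
    simp only [Function.comp]
    congr 1
    simp only [Equiv.swap_apply_def]
    grind

theorem seg_of_span {I : Finset (Fin n)} (hI : ∀ i ∈ I, i.1 + 1 < n) {i j : Fin n}
    (h : (ee i - ee j : V n) ∈ Submodule.span ℝ (alphaA n '' (I : Set (Fin n)))) :
    segc I i = segc I j := by
  have key : ∀ v ∈ Submodule.span ℝ (alphaA n '' (I : Set (Fin n))),
      inn (fun k => (segc I k : ℝ)) v = 0 := by
    intro v hv
    induction hv using Submodule.span_induction with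
    | mem v hv =>
      obtain ⟨k, hk, rfl⟩ := hv
      rw [alphaA_pos (hI k hk), inn_ee, ← segc_succ hk (hI k hk), sub_self]
    | zero => simp [inn]
    | add v w _ _ h1 h2 =>
      unfold inn at *
      simp [mul_add, Finset.sum_add_distrib, h1, h2]
    | smul r v _ h1 =>
      unfold inn at *
      simp only [Pi.smul_apply, smul_eq_mul, mul_left_comm _ r, ← Finset.mul_sum, h1, mul_zero]
  have := key _ h
  rw [inn_ee, sub_eq_zero] at this
  exact_mod_cast this

theorem span_of_seg {I : Finset (Fin n)} {i j : Fin n} (h : segc I i = segc I j) :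
    (ee i - ee j : V n) ∈ Submodule.span ℝ (alphaA n '' (I : Set (Fin n))) := by
  rcases le_total i j with hij | hij
  · exact seg_span i (j.1 - i.1) j (by have : i.1 ≤ j.1 := hij; omega) (segc_all hij h)
  · rw [← neg_sub]
    exact Submodule.neg_mem _
      (seg_span j (i.1 - j.1) i (by have : j.1 ≤ i.1 := hij; omega) (segc_all hij h.symm))

theorem reg_iff {I : Finset (Fin n)} (hI : ∀ i ∈ I, i.1 + 1 < n) (x : V n) :
    RegI n I x ↔ CReg (segc I) x := by
  constructor
  · intro h i j hc hx
    by_contra hij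
    refine h (ee i - ee j) ⟨⟨i, j, hij, rfl⟩, span_of_seg hc⟩ ?_
    rw [inn_ee, hx, sub_self]
  · rintro h β ⟨⟨i, j, hij, rfl⟩, hs⟩ h0
    rw [inn_ee, sub_eq_zero] at h0
    exact hij (h i j (seg_of_span hI hs) h0)

theorem lam_reg {I : Finset (Fin n)} {x : V n}
    (hx : ∀ i ∈ I, 0 < inn x (alphaA n i)) : CReg (segc I) x := by
  have key : ∀ i j, i < j → segc I i = segc I j → x j < x i := by
    intro i j hij h
    have hij' : i.1 < j.1 := hij
    exact seg_dec x hx i (j.1 - i.1 - 1) j (by omega) (segc_all hij.le h)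
  intro i j hc hv
  rcases lt_trichotomy i j with h | h | h
  · exact absurd hv (key i j h hc).ne'
  · exact h
  · exact absurd hv (key j i h hc.symm).ne

theorem step_conn {I : Finset (Fin n)} (hI : ∀ i ∈ I, i.1 + 1 < n) {x y : V n}
    (h : SStep (segc I) x y) : Relation.ReflTransGen (ConnStepA n I) x y := by
  obtain ⟨hx, hy, i, j, rfl⟩ := h
  have key : ∀ i j : Fin n, i < j → CReg (segc I) (x ∘ Equiv.swap i j) →
      Relation.ReflTransGen (ConnStepA n I) x (x ∘ Equiv.swap i j) := by
    intro i j hij hy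
    by_cases hne : x ∘ Equiv.swap i j = x
    · rw [hne]
    refine Relation.ReflTransGen.single ⟨(reg_iff hI x).2 hx, (reg_iff hI _).2 hy, ?_⟩
    by_cases hc : segc I i = segc I j
    · left
      exact seg_orb i (j.1 - i.1) j (by have : i.1 < j.1 := hij; omega) (segc_all hij.le hc) x
    · right
      refine ⟨ee i - ee j, ⟨(reg_iff hI x).2 hx, ⟨i, j, hij, rfl⟩,
        fun h => hc (seg_of_span hI h.2), ?_, ?_⟩, ?_⟩
      · rw [sRefl_ee x hij.ne]; exact (reg_iff hI _).2 hy
      · rw [sRefl_ee x hij.ne]; exact hne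
      · rw [sRefl_ee x hij.ne]; exact .refl
  rcases lt_trichotomy i j with h | h | h
  · exact key i j h hy
  · rw [h, Equiv.swap_self]; exact .refl
  · rw [Equiv.swap_comm] at hy ⊢
    exact key j i h hy

theorem orb_perm {x y : V n} (h : WOrb n x y) : ∃ σ : Equiv.Perm (Fin n), y = x ∘ σ := by
  unfold WOrb WIOrb at h
  induction h with
  | refl => exact ⟨1, rfl⟩
  | tail _ h ih =>
    obtain ⟨σ, rfl⟩ := ih
    obtain ⟨i, _, rfl⟩ := h
    by_cases hi : i.1 + 1 < n
    · rw [alphaA_pos hi, sRefl_ee _ (by intro h; have := congrArg Fin.val h; simp at this)]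
      exact ⟨σ * Equiv.swap i ⟨i.1 + 1, hi⟩, rfl⟩
    · refine ⟨σ, ?_⟩
      rw [alphaA, dif_neg hi, sRefl_zero]

end transl

/-- Theorem 6.12 / `bkswthm1`, Brundan's theorem for type `A`. -/
theorem statement14 (n : ℕ) (I J : Finset (Fin n)) (lbar : V n)
    (hIidx : ∀ i ∈ I, i.1 + 1 < n) (hJidx : ∀ j ∈ J, j.1 + 1 < n)
    (hint : IntegralW n lbar) (hdom : DominantW n lbar)
    (hJ : ∀ i : Fin n, i.1 + 1 < n → (i ∈ J ↔ inn lbar (alphaA n i) = 0)) :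
    ∀ lam ∈ IWJsetA n I lbar, ∀ mu ∈ IWJsetA n I lbar, ConnA n I lam mu := by
  intro lam hlam mu hmu
  have h1 := lam_reg hlam.2.2
  have h2 := lam_reg hmu.2.2
  refine ⟨(reg_iff hIidx _).2 h1, (reg_iff hIidx _).2 h2, ?_⟩
  obtain ⟨σ, hσ⟩ := orb_perm hlam.1
  obtain ⟨τ, hτ⟩ := orb_perm hmu.1
  have h := comb_final (segc I) lam mu h1 h2
    ⟨τ.trans σ.symm, by rw [hσ, hτ]; funext k; simp⟩
  clear hσ hτ hmu
  induction h with
  | refl => exact .refl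
  | tail _ hs ih => exact (ih hs.1).trans (step_conn hIidx hs)

end JantzenBlocksA
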